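/- arXiv:2508.11874 — 2 statements merged into one kernel-verified Lean document; each statement's English description precedes it below -/
import Mathlib

section
/- (Daskalakis–Mehta–Papadimitriou bound.) Let (R, C) be a bimatrix game with all payoffs in [0,1]. Let i ∈ Δ_m be an arbitrary mixed strategy of the row player, let j ∈ Δ_n be a best response of the column player to i, let k ∈ Δ_m be a best response of the row player to j, and set r_1 = (i + k)/2. Then the profile (r_1, j) is a 1/2-approximate Nash equilibrium: max_{x'∈Δ_m} x'ᵀR j − r_1ᵀR j ≤ 1/2 and max_{y'∈Δ_n} r_1ᵀC y' − r_1ᵀC j ≤ 1/2. -/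
/-!
Payoffs are linear in the row strategy, so the regret of either player at a mixture
`s • i + t • k` is the `s, t`-average of the regrets at `i` and at `k`. Each player has no regret
at one of the two: the column player at `i`, since `j` is a best response to `i`, and the row
player at `k`, since `k` is a best response to `j`. At the other, the regret is at most the spread
of the payoffs available against the opponent's fixed strategy. Balancing the two bounds gives the
weights `s = t = 1/2`.
-/

open Finset

/-- Expected payoff `xᵀ M y` in a bimatrix game. -/
noncomputable def bimatrixPay {m n : ℕ} (M : Matrix (Fin m) (Fin n) ℝ)
    (x : Fin m → ℝ) (y : Fin n → ℝ) : ℝ :=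
  ∑ a, ∑ b, x a * M a b * y b

section stdSimplex

variable {𝕜 ι : Type*} [Field 𝕜] [LinearOrder 𝕜] [IsStrictOrderedRing 𝕜] [Fintype ι]
  {x x' v : ι → 𝕜}

lemma dotProduct_mem_of_convex {S : Set 𝕜} (hS : Convex 𝕜 S) (hx : x ∈ stdSimplex 𝕜 ι)
    (hv : ∀ a, v a ∈ S) : x ⬝ᵥ v ∈ S :=
  hS.sum_mem (fun a _ => hx.1 a) hx.2 fun a _ => hv a

lemma dotProduct_sub_dotProduct_le {D : 𝕜} (hx : x ∈ stdSimplex 𝕜 ι) (hx' : x' ∈ stdSimplex 𝕜 ι)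
    (hv : ∀ a a', v a - v a' ≤ D) : x ⬝ᵥ v - x' ⬝ᵥ v ≤ D := by
  have average_le (a' : ι) : x ⬝ᵥ v ≤ D + v a' :=
    dotProduct_mem_of_convex (convex_Iic (D + v a')) hx fun a => sub_le_iff_le_add.mp (hv a a')
  have le_average : x ⬝ᵥ v - D ≤ x' ⬝ᵥ v :=
    dotProduct_mem_of_convex (convex_Ici (x ⬝ᵥ v - D)) hx' fun a' =>
      sub_le_iff_le_add'.mpr (average_le a')
  exact sub_le_comm.mp le_average

end stdSimplex

section bimatrixPay

open scoped Matrix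

variable {m n : ℕ} (M : Matrix (Fin m) (Fin n) ℝ)

lemma bimatrixPay_eq_dotProduct (x : Fin m → ℝ) (y : Fin n → ℝ) :
    bimatrixPay M x y = x ⬝ᵥ (M *ᵥ y) := by
  simp only [bimatrixPay, dotProduct, Matrix.mulVec, Finset.mul_sum, mul_assoc]

lemma bimatrixPay_transpose (x : Fin m → ℝ) (y : Fin n → ℝ) :
    bimatrixPay Mᵀ y x = bimatrixPay M x y := by
  rw [bimatrixPay_eq_dotProduct, bimatrixPay_eq_dotProduct, Matrix.mulVec_transpose,
    dotProduct_comm, Matrix.dotProduct_mulVec]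

lemma bimatrixPay_smul_add_smul_left (s t : ℝ) (x z : Fin m → ℝ) (y : Fin n → ℝ) :
    bimatrixPay M (s • x + t • z) y = s * bimatrixPay M x y + t * bimatrixPay M z y := by
  simp only [bimatrixPay_eq_dotProduct, add_dotProduct, smul_dotProduct, smul_eq_mul]

variable {M} {D : ℝ}

lemma bimatrixPay_sub_le_left (hM : ∀ a a' b, M a b - M a' b ≤ D)
    {x x' : Fin m → ℝ} (hx : x ∈ stdSimplex ℝ (Fin m)) (hx' : x' ∈ stdSimplex ℝ (Fin m))
    {y : Fin n → ℝ} (hy : y ∈ stdSimplex ℝ (Fin n)) :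
    bimatrixPay M x y - bimatrixPay M x' y ≤ D := by
  have mulVec_sub_le (a a' : Fin m) : (M *ᵥ y) a - (M *ᵥ y) a' ≤ D := by
    rw [Matrix.mulVec, Matrix.mulVec, ← sub_dotProduct, dotProduct_comm]
    exact dotProduct_mem_of_convex (convex_Iic D) hy (hM a a')
  rw [bimatrixPay_eq_dotProduct, bimatrixPay_eq_dotProduct]
  exact dotProduct_sub_dotProduct_le hx hx' mulVec_sub_le

lemma bimatrixPay_sub_le_right (hM : ∀ a b b', M a b - M a b' ≤ D)
    {x : Fin m → ℝ} (hx : x ∈ stdSimplex ℝ (Fin m))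
    {y y' : Fin n → ℝ} (hy : y ∈ stdSimplex ℝ (Fin n)) (hy' : y' ∈ stdSimplex ℝ (Fin n)) :
    bimatrixPay M x y - bimatrixPay M x y' ≤ D := by
  rw [← bimatrixPay_transpose, ← bimatrixPay_transpose M]
  exact bimatrixPay_sub_le_left (fun b b' a => hM a b b') hy hy' hx

end bimatrixPay

lemma half_add_eq_smul_add_smul {ι 𝕜 : Type*} [Field 𝕜] (x z : ι → 𝕜) :
    (fun a => (x a + z a) / 2) = (1 / 2 : 𝕜) • x + (1 / 2 : 𝕜) • z := by
  ext a
  simp only [Pi.add_apply, Pi.smul_apply, smul_eq_mul]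
  ring

theorem stmt9_general {m n : ℕ} (R C : Matrix (Fin m) (Fin n) ℝ) {D E : ℝ}
    (hR : ∀ a a' b, R a b - R a' b ≤ D) (hC : ∀ a b b', C a b - C a b' ≤ E)
    {s t : ℝ} (hs : 0 ≤ s) (ht : 0 ≤ t) (hst : s + t = 1)
    (i : Fin m → ℝ) (hi : i ∈ stdSimplex ℝ (Fin m))
    (j : Fin n → ℝ) (hj : j ∈ stdSimplex ℝ (Fin n))
    (hjBR : ∀ y' ∈ stdSimplex ℝ (Fin n), bimatrixPay C i y' ≤ bimatrixPay C i j)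
    (k : Fin m → ℝ) (hk : k ∈ stdSimplex ℝ (Fin m))
    (hkBR : ∀ x' ∈ stdSimplex ℝ (Fin m), bimatrixPay R x' j ≤ bimatrixPay R k j) :
    (∀ x' ∈ stdSimplex ℝ (Fin m),
      bimatrixPay R x' j - bimatrixPay R (s • i + t • k) j ≤ s * D) ∧
    (∀ y' ∈ stdSimplex ℝ (Fin n),
      bimatrixPay C (s • i + t • k) y' - bimatrixPay C (s • i + t • k) j ≤ t * E) := by
  simp only [bimatrixPay_smul_add_smul_left]
  refine ⟨fun x' hx' => ?_, fun y' hy' => ?_⟩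
  · calc bimatrixPay R x' j - (s * bimatrixPay R i j + t * bimatrixPay R k j)
        = s * (bimatrixPay R x' j - bimatrixPay R i j)
            + t * (bimatrixPay R x' j - bimatrixPay R k j) := by
          linear_combination (-bimatrixPay R x' j) * hst
      _ ≤ s * D + t * 0 := by
          gcongr
          · exact bimatrixPay_sub_le_left hR hx' hi hj
          · exact sub_nonpos.mpr (hkBR x' hx')
      _ = s * D := by ring
  · calc s * bimatrixPay C i y' + t * bimatrixPay C k y'
          - (s * bimatrixPay C i j + t * bimatrixPay C k j)
        = s * (bimatrixPay C i y' - bimatrixPay C i j)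
            + t * (bimatrixPay C k y' - bimatrixPay C k j) := by ring
      _ ≤ s * 0 + t * E := by
          gcongr
          · exact sub_nonpos.mpr (hjBR y' hy')
          · exact bimatrixPay_sub_le_right hC hk hy' hj
      _ = t * E := by ring

/-- Daskalakis–Mehta–Papadimitriou: if `j` is a best response of the column player to an
arbitrary `i`, `k` is a best response of the row player to `j`, and `r₁ = (i+k)/2`, then
`(r₁, j)` is a `1/2`-approximate Nash equilibrium. -/
theorem stmt9 {m n : ℕ} (R C : Matrix (Fin m) (Fin n) ℝ)
    (hR : ∀ a b, R a b ∈ Set.Icc (0:ℝ) 1) (hC : ∀ a b, C a b ∈ Set.Icc (0:ℝ) 1)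
    (i : Fin m → ℝ) (hi : i ∈ stdSimplex ℝ (Fin m))
    (j : Fin n → ℝ) (hj : j ∈ stdSimplex ℝ (Fin n))
    (hjBR : ∀ y' ∈ stdSimplex ℝ (Fin n), bimatrixPay C i y' ≤ bimatrixPay C i j)
    (k : Fin m → ℝ) (hk : k ∈ stdSimplex ℝ (Fin m))
    (hkBR : ∀ x' ∈ stdSimplex ℝ (Fin m), bimatrixPay R x' j ≤ bimatrixPay R k j) :
    (∀ x' ∈ stdSimplex ℝ (Fin m),
      bimatrixPay R x' j - bimatrixPay R (fun a => (i a + k a) / 2) j ≤ 1/2) ∧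
    (∀ y' ∈ stdSimplex ℝ (Fin n),
      bimatrixPay C (fun a => (i a + k a) / 2) y'
        - bimatrixPay C (fun a => (i a + k a) / 2) j ≤ 1/2) := by
  rw [half_add_eq_smul_add_smul]
  simpa only [mul_one] using stmt9_general R C (D := 1) (E := 1)
    (fun a a' b => by linarith [(hR a b).2, (hR a' b).1])
    (fun a b b' => by linarith [(hC a b).2, (hC a b').1])
    one_half_pos.le one_half_pos.le (add_halves 1) i hi j hj hjBR k hk hkBR
end

section
/- (Kontogiannis–Panagopoulou–Spirakis bound.) Let (R, C) be a bimatrix game with all payoffs in [0,1]. Let i ∈ Δ_m and j ∈ Δ_n be arbitrary mixed strategies, let k ∈ Δ_m be a best response of the row player to j, and let l ∈ Δ_n be a best response of the column player to i. Then the profile ((i + k)/2, (j + l)/2) is a 3/4-approximate Nash equilibrium: max_{x'∈Δ_m} x'ᵀR((j+l)/2) − ((i+k)/2)ᵀR((j+l)/2) ≤ 3/4 and max_{y'∈Δ_n} ((i+k)/2)ᵀC y' − ((i+k)/2)ᵀC((j+l)/2) ≤ 3/4. -/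
open Finset

/-!
Mix with weights: the row player uses `(1 - s) i + s k`, the column player `(1 - t) j + t l`.
Let `v` be the row player's best-response payoff against `j`. A row deviation earns at most
`(1 - t) v + t`: at most `v` against `j`, and at most `1` against `l`. The profile itself contains
the pair `(k, j)` with weight `s (1 - t)`, so by nonnegativity it earns at least `s (1 - t) v`.
Since `v ≤ 1`, the difference is at most `1 - s (1 - t)`. Exchanging the players exchanges `s`
and `t`, and `s = t = 1/2` minimizes the larger of the two bounds.
-/

section BilinearGame

variable {𝕜 E F : Type*} [CommRing 𝕜] [PartialOrder 𝕜] [IsOrderedRing 𝕜]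
  [AddCommMonoid E] [Module 𝕜 E] [AddCommMonoid F] [Module 𝕜 F]
  {X : Set E} {Y : Set F} {i k x' : E} {j l : F} {s t : 𝕜}

theorem apply_combo_le_of_apply_le {A : E →ₗ[𝕜] F →ₗ[𝕜] 𝕜} (hj : A x' j ≤ A k j)
    (hl : A x' l ≤ 1) (ht : t ∈ Set.Icc 0 1) :
    A x' ((1 - t) • j + t • l) ≤ (1 - t) * A k j + t :=
  calc A x' ((1 - t) • j + t • l) = (1 - t) * A x' j + t * A x' l := by
        simp only [map_add, map_smul, smul_eq_mul]
    _ ≤ (1 - t) * A k j + t :=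
        add_le_add (mul_le_mul_of_nonneg_left hj (sub_nonneg.2 ht.2))
          (mul_le_of_le_one_right ht.1 hl)

theorem mul_apply_le_apply_combo {A : E →ₗ[𝕜] F →ₗ[𝕜] 𝕜} (hij : 0 ≤ A i j)
    (hil : 0 ≤ A i l) (hkl : 0 ≤ A k l) (hs : s ∈ Set.Icc 0 1) (ht : t ∈ Set.Icc 0 1) :
    s * (1 - t) * A k j ≤ A ((1 - s) • i + s • k) ((1 - t) • j + t • l) := by
  have expand : A ((1 - s) • i + s • k) ((1 - t) • j + t • l) =
      s * (1 - t) * A k j + ((1 - s) * (1 - t) * A i j + (1 - s) * t * A i l + s * t * A k l) := by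
    simp only [map_add, map_smul, LinearMap.add_apply, LinearMap.smul_apply, smul_eq_mul]
    ring
  have hs' : 0 ≤ 1 - s := sub_nonneg.2 hs.2
  have ht' : 0 ≤ 1 - t := sub_nonneg.2 ht.2
  rw [expand]
  exact le_add_of_nonneg_right <| add_nonneg
    (add_nonneg (mul_nonneg (mul_nonneg hs' ht') hij) (mul_nonneg (mul_nonneg hs' ht.1) hil))
    (mul_nonneg (mul_nonneg hs.1 ht.1) hkl)

theorem apply_combo_sub_le_one_sub_mul {A : E →ₗ[𝕜] F →ₗ[𝕜] 𝕜}
    (hA : ∀ x ∈ X, ∀ y ∈ Y, A x y ∈ Set.Icc 0 1) (hi : i ∈ X) (hk : k ∈ X) (hj : j ∈ Y)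
    (hl : l ∈ Y) (hkBR : IsMaxOn (fun x => A x j) X k)
    (hs : s ∈ Set.Icc 0 1) (ht : t ∈ Set.Icc 0 1) (hx' : x' ∈ X) :
    A x' ((1 - t) • j + t • l) - A ((1 - s) • i + s • k) ((1 - t) • j + t • l)
      ≤ 1 - s * (1 - t) := by
  have deviation := apply_combo_le_of_apply_le (hkBR hx') (hA x' hx' l hl).2 ht
  have profile :=
    mul_apply_le_apply_combo (hA i hi j hj).1 (hA i hi l hl).1 (hA k hk l hl).1 hs ht
  have weight_nonneg : 0 ≤ (1 - s) * (1 - t) :=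
    mul_nonneg (sub_nonneg.2 hs.2) (sub_nonneg.2 ht.2)
  calc A x' ((1 - t) • j + t • l) - A ((1 - s) • i + s • k) ((1 - t) • j + t • l)
      ≤ (1 - t) * A k j + t - s * (1 - t) * A k j := sub_le_sub deviation profile
    _ = (1 - s) * (1 - t) * A k j + t := by ring
    _ ≤ (1 - s) * (1 - t) + t :=
        add_le_add_left (mul_le_of_le_one_right weight_nonneg (hA k hk j hj).2) t
    _ = 1 - s * (1 - t) := by ring

theorem stmt10_general {A B : E →ₗ[𝕜] F →ₗ[𝕜] 𝕜}
    (hA : ∀ x ∈ X, ∀ y ∈ Y, A x y ∈ Set.Icc 0 1) (hB : ∀ x ∈ X, ∀ y ∈ Y, B x y ∈ Set.Icc 0 1)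
    (hi : i ∈ X) (hj : j ∈ Y)
    (hk : k ∈ X) (hkBR : IsMaxOn (fun x => A x j) X k)
    (hl : l ∈ Y) (hlBR : IsMaxOn (fun y => B i y) Y l)
    (hs : s ∈ Set.Icc 0 1) (ht : t ∈ Set.Icc 0 1) :
    (∀ x' ∈ X,
      A x' ((1 - t) • j + t • l) - A ((1 - s) • i + s • k) ((1 - t) • j + t • l)
        ≤ 1 - s * (1 - t)) ∧
    (∀ y' ∈ Y,
      B ((1 - s) • i + s • k) y' - B ((1 - s) • i + s • k) ((1 - t) • j + t • l)
        ≤ 1 - t * (1 - s)) :=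
  ⟨fun _ hx' => apply_combo_sub_le_one_sub_mul hA hi hk hj hl hkBR hs ht hx',
    fun _ hy' => apply_combo_sub_le_one_sub_mul (A := B.flip) (fun y hy x hx => hB x hx y hy)
      hj hl hi hk hlBR ht hs hy'⟩

end BilinearGame

theorem toLinearMap₂'_mem_of_convex {𝕜 m n V : Type*} [Field 𝕜] [LinearOrder 𝕜]
    [IsStrictOrderedRing 𝕜] [AddCommGroup V] [Module 𝕜 V] [Fintype m] [DecidableEq m] [Fintype n]
    [DecidableEq n] {S : Set V} (hS : Convex 𝕜 S) {M : Matrix m n V} (hM : ∀ a b, M a b ∈ S) :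
    ∀ x ∈ stdSimplex 𝕜 m, ∀ y ∈ stdSimplex 𝕜 n, Matrix.toLinearMap₂' 𝕜 M x y ∈ S := by
  intro x hx y hy
  simp only [Matrix.toLinearMap₂'_apply, ← Finset.smul_sum]
  exact hS.sum_mem (fun a _ => hx.1 a) hx.2 fun a _ =>
    hS.sum_mem (fun b _ => hy.1 b) hy.2 fun b _ => hM a b

theorem bimatrixPay_eq_toLinearMap₂' {m n : ℕ} (M : Matrix (Fin m) (Fin n) ℝ)
    (x : Fin m → ℝ) (y : Fin n → ℝ) :
    bimatrixPay M x y = Matrix.toLinearMap₂' ℝ M x y := by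
  simp only [bimatrixPay, Matrix.toLinearMap₂'_apply, smul_eq_mul, mul_assoc, mul_comm (M _ _)]

theorem half_add_eq_combo {𝕜 ι : Type*} [Field 𝕜] [NeZero (2 : 𝕜)] (x y : ι → 𝕜) :
    (fun a => (x a + y a) / 2) = (1 - 1 / 2 : 𝕜) • x + (1 / 2 : 𝕜) • y := by
  rw [sub_half]
  ext a
  simp only [Pi.add_apply, Pi.smul_apply, smul_eq_mul]
  ring

/-- Kontogiannis–Panagopoulou–Spirakis: for arbitrary `i, j`, if `k` is a best response of
the row player to `j` and `l` a best response of the column player to `i`, then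
`((i+k)/2, (j+l)/2)` is a `3/4`-approximate Nash equilibrium. -/
theorem stmt10 {m n : ℕ} (R C : Matrix (Fin m) (Fin n) ℝ)
    (hR : ∀ a b, R a b ∈ Set.Icc (0:ℝ) 1) (hC : ∀ a b, C a b ∈ Set.Icc (0:ℝ) 1)
    (i : Fin m → ℝ) (hi : i ∈ stdSimplex ℝ (Fin m))
    (j : Fin n → ℝ) (hj : j ∈ stdSimplex ℝ (Fin n))
    (k : Fin m → ℝ) (hk : k ∈ stdSimplex ℝ (Fin m))
    (hkBR : ∀ x' ∈ stdSimplex ℝ (Fin m), bimatrixPay R x' j ≤ bimatrixPay R k j)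
    (l : Fin n → ℝ) (hl : l ∈ stdSimplex ℝ (Fin n))
    (hlBR : ∀ y' ∈ stdSimplex ℝ (Fin n), bimatrixPay C i y' ≤ bimatrixPay C i l) :
    (∀ x' ∈ stdSimplex ℝ (Fin m),
      bimatrixPay R x' (fun b => (j b + l b) / 2)
        - bimatrixPay R (fun a => (i a + k a) / 2) (fun b => (j b + l b) / 2) ≤ 3/4) ∧
    (∀ y' ∈ stdSimplex ℝ (Fin n),
      bimatrixPay C (fun a => (i a + k a) / 2) y'
        - bimatrixPay C (fun a => (i a + k a) / 2) (fun b => (j b + l b) / 2) ≤ 3/4) := by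
  have half_mem : (1 / 2 : ℝ) ∈ Set.Icc 0 1 := by norm_num
  simp only [bimatrixPay_eq_toLinearMap₂', half_add_eq_combo,
    show (3 / 4 : ℝ) = 1 - 1 / 2 * (1 - 1 / 2) by norm_num] at hkBR hlBR ⊢
  exact stmt10_general (toLinearMap₂'_mem_of_convex (convex_Icc 0 1) hR)
    (toLinearMap₂'_mem_of_convex (convex_Icc 0 1) hC) hi hj hk hkBR hl hlBR half_mem half_mem
end
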